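/- Fix a real number T. There exists a constant C = C(T) > 0 such that for every integer N ≥ 3 and every primitive Dirichlet character χ modulo N for which GRH(χ) holds, one has L(1 + 2iT, χ) ≠ 0 and |L′(1 + 2iT, χ) / L(1 + 2iT, χ)| ≤ C · log log N. -/

import Mathlib

open Complex

/-- GRH for a single Dirichlet L-function: every zero of `L(s, χ)` in the critical strip
`0 < Re(s) < 1` lies on the critical line `Re(s) = 1/2`. -/
def GRHFor {N : ℕ} [NeZero N] (χ : DirichletCharacter ℂ N) : Prop :=
  ∀ s : ℂ, 0 < s.re → s.re < 1 → DirichletCharacter.LFunction χ s = 0 → s.re = 1 / 2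

lemma charsum_bound {N : ℕ} [NeZero N] (χ : DirichletCharacter ℂ N) (hχ : χ ≠ 1) (n : ℕ) :
    ‖∑ k ∈ Finset.Icc 1 n, χ k‖ ≤ 2 * N := by
  have hN : 0 < N := Nat.pos_of_ne_zero (NeZero.ne N)
  have h0 : ∑ k ∈ Finset.range N, χ k = 0 := by
    rw [← MulChar.sum_eq_zero_of_ne_one hχ]
    refine Finset.sum_bij' (fun k _ => (k : ZMod N)) (fun a _ => a.val) ?_ ?_ ?_ ?_ ?_
    · simp
    · intro a _; simpa using ZMod.val_lt a
    · intro a ha; simpa using ZMod.val_cast_of_lt (Finset.mem_range.1 ha)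
    · simp
    · simp
  have h1 : ∀ m, ‖∑ k ∈ Finset.range m, χ k‖ ≤ N := by
    intro m
    induction m using Nat.strong_induction_on with
    | _ m ih =>
      by_cases hm : m < N
      · refine (norm_sum_le _ _).trans ?_
        refine (Finset.sum_le_sum (fun k _ => χ.norm_le_one _)).trans ?_
        simp; exact_mod_cast hm.le
      · push Not at hm
        obtain ⟨d, rfl⟩ := Nat.exists_eq_add_of_le hm
        rw [Finset.sum_range_add, h0, zero_add]
        simpa using ih d (by omega)
  have h2 : ∑ k ∈ Finset.Icc 1 n, χ k = ∑ k ∈ Finset.range (n+1), χ k - χ 0 := by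
    have h3 := Finset.sum_Ico_add' (fun k : ℕ => χ (k : ZMod N)) 0 n 1
    rw [← Finset.range_eq_Ico] at h3
    rw [Finset.sum_range_succ', h3, Nat.cast_zero, add_sub_cancel_right]
    rfl
  rw [h2]
  refine (norm_sub_le _ _).trans ?_
  have := h1 (n+1)
  have := χ.norm_le_one 0
  have : (1:ℝ) ≤ N := by exact_mod_cast hN
  linarith

lemma L_bound {N : ℕ} [NeZero N] (χ : DirichletCharacter ℂ N) (hχ : χ ≠ 1) (s : ℂ)
    (hs : 0 < s.re) : ‖DirichletCharacter.LFunction χ s‖ ≤ ‖s‖ * (2 * N / s.re) := by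
  set S : ℝ → ℂ := fun t => ∑ k ∈ Finset.Icc 1 ⌊t⌋₊, χ k with hS
  have hSb : ∀ t, ‖S t‖ ≤ 2 * N := fun t => charsum_bound χ hχ _
  have hS0 : ∀ t, t < 1 → S t = 0 := by
    intro t ht
    simp only [hS]
    rw [Nat.floor_eq_zero.2 ht]; simp
  have hSm : Measurable S := by
    have : S = (fun n : ℕ => ∑ k ∈ Finset.Icc 1 n, χ k) ∘ (fun t : ℝ => ⌊t⌋₊) := rfl
    rw [this]
    exact (measurable_from_nat).comp Nat.measurable_floor
  have hloc : MeasureTheory.LocallyIntegrable S := by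
    intro x
    refine ⟨Metric.ball x 1, Metric.ball_mem_nhds _ one_pos, ?_⟩
    refine MeasureTheory.IntegrableOn.of_bound (by simp) hSm.aestronglyMeasurable (2*N) ?_
    exact Filter.Eventually.of_forall hSb
  have hdiff : ∀ z : ℂ, 0 < z.re → DifferentiableAt ℂ (fun z => z * mellin S (-z)) z := by
    intro z hz
    refine differentiableAt_id.mul ?_
    have := mellin_differentiableAt_of_isBigO_rpow (f := S) (s := -z) (a := 0) (b := -z.re - 1)
      (hloc.locallyIntegrableOn _) ?_ (by simpa) ?_ (by simp)
    · exact this.comp z differentiable_neg.differentiableAt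
    · refine Asymptotics.IsBigO.of_bound (2*N) (Filter.Eventually.of_forall ?_)
      intro x; simpa using hSb x
    · refine Asymptotics.IsBigO.of_bound 1 ?_
      filter_upwards [nhdsWithin_le_nhds (Iio_mem_nhds (zero_lt_one (α := ℝ)))] with t ht
      rw [hS0 t ht]; simp
  have hmel : ∀ z : ℂ, mellin S (-z) = ∫ t in Set.Ioi (1:ℝ), S t * (t:ℂ) ^ (-(z+1)) := by
    intro z
    rw [mellin, ← MeasureTheory.integral_Ici_eq_integral_Ioi (x := (1:ℝ))]
    symm
    rw [MeasureTheory.setIntegral_eq_of_subset_of_forall_sdiff_eq_zero (s := Set.Ici (1:ℝ)) (t := Set.Ioi 0) measurableSet_Ioi]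
    · refine MeasureTheory.setIntegral_congr_fun measurableSet_Ici ?_
      intro t ht
      simp only [smul_eq_mul]
      rw [mul_comm]; congr 2; ring
    · intro t ht; exact lt_of_lt_of_le (zero_lt_one (α := ℝ)) (Set.mem_Ici.1 ht)
    · intro t ht
      rw [hS0 t (by simpa using ht.2)]; simp
  have heq : Set.EqOn (DirichletCharacter.LFunction χ) (fun z => z * mellin S (-z)) {z | 0 < z.re} := by
    have hopen : IsOpen {z : ℂ | 0 < z.re} := isOpen_lt continuous_const continuous_re
    refine AnalyticOnNhd.eqOn_of_preconnected_of_eventuallyEq (𝕜 := ℂ) (z₀ := 2) ?_ ?_ ?_ (by simp) ?_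
    · exact (DirichletCharacter.differentiable_LFunction hχ).differentiableOn.analyticOnNhd hopen
    · exact DifferentiableOn.analyticOnNhd (fun z hz => (hdiff z hz).differentiableWithinAt) hopen
    · exact (convex_halfSpace_re_gt 0).isPreconnected
    · have : {z : ℂ | 1 < z.re} ∈ nhds (2:ℂ) :=
        (isOpen_lt continuous_const continuous_re).mem_nhds (by simp)
      filter_upwards [this] with z hz
      have hz' : 1 < z.re := hz
      rw [DirichletCharacter.LFunction_eq_LSeries χ hz, LSeries_eq_mul_integral (fun n => χ n) (r := 0) le_rfl (by linarith)
        (DirichletCharacter.LSeriesSummable_of_one_lt_re χ hz), hmel]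
      refine Asymptotics.IsBigO.of_bound (2*N) (Filter.Eventually.of_forall ?_)
      intro x; simpa using charsum_bound χ hχ x
  rw [heq hs]
  simp only [norm_mul]
  gcongr
  rw [hmel]
  have hint : MeasureTheory.IntegrableOn (fun t : ℝ => 2 * (N:ℝ) * t ^ (-s.re - 1)) (Set.Ioi 1) :=
    (integrableOn_Ioi_rpow_of_lt (by linarith) one_pos).const_mul _
  refine (MeasureTheory.norm_integral_le_of_norm_le hint ?_).trans ?_
  · filter_upwards [MeasureTheory.self_mem_ae_restrict measurableSet_Ioi] with t ht
    have ht0 : (0:ℝ) < t := lt_trans one_pos ht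
    rw [norm_mul, norm_cpow_eq_rpow_re_of_pos ht0]
    have : (-(s+1)).re = -s.re - 1 := by simp; ring
    rw [this]
    gcongr
    exact hSb t
  · rw [MeasureTheory.integral_const_mul, integral_Ioi_rpow_of_lt (by linarith) one_pos]
    simp
    rw [div_eq_mul_inv]


lemma logderiv_bound (g : ℂ → ℂ) (c : ℂ) (hg : Differentiable ℂ g)
    (h0 : ∀ z ∈ Metric.ball c (3/2), g z ≠ 0) (M : ℝ) (hM : 0 < M)
    (hb : ∀ z ∈ Metric.ball c (3/2), ‖g z‖ ≤ Real.exp M * ‖g c‖) (s : ℂ) (hs : dist s c ≤ 5/4) :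
    ‖deriv g s / g s‖ ≤ 176 * M := by
  have hd : Differentiable ℂ (deriv g) := by
    exact (hg.contDiff (n := 2)).differentiable_deriv_two
  have hex : DifferentiableOn ℂ (fun z => deriv g z / g z) (Metric.ball c (3/2)) :=
    hd.differentiableOn.div hg.differentiableOn h0
  obtain ⟨f, hfc, hf⟩ := hex.isExactOn_ball.with_val_at c 0
  have hcB : c ∈ Metric.ball c (3/2) := Metric.mem_ball_self (by norm_num)
  have hder : ∀ z ∈ Metric.ball c (3/2), HasDerivAt (fun z => g z * exp (-f z)) 0 z := by
    intro z hz
    have h1 := (hg z).hasDerivAt.mul ((hf z hz).neg.cexp)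
    convert! h1 using 1
    have := h0 z hz
    field_simp
    ring
  have hconst : ∀ z ∈ Metric.ball c (3/2), g z * exp (-f z) = g c := by
    intro z hz
    have := IsOpen.is_const_of_deriv_eq_zero (f := fun z => g z * exp (-f z)) Metric.isOpen_ball
      (convex_ball c (3/2)).isPreconnected
      (fun z hz => (hder z hz).differentiableAt.differentiableWithinAt)
      (fun z hz => (hder z hz).deriv) hz hcB
    simpa [hfc] using this
  have hre : ∀ z ∈ Metric.ball c (3/2), (f z).re ≤ M := by
    intro z hz
    have h1 := hconst z hz
    have h2 : g z = g c * exp (f z) := by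
      rw [← h1, mul_assoc, ← exp_add]; simp
    have h3 := hb z hz
    rw [h2, norm_mul, norm_exp, mul_comm] at h3
    have h4 : 0 < ‖g c‖ := norm_pos_iff.2 (h0 c hcB)
    exact Real.exp_le_exp.1 (le_of_mul_le_mul_right h3 h4)
  have hfb : ∀ z, dist z c ≤ 11/8 → ‖f z‖ ≤ 22 * M := by
    intro z hz
    have := borelCaratheodory_zero (f := fun w => f (w + c)) (R := 3/2) (z := z - c) hM ?_ ?_ (by norm_num) ?_ (by simpa using hfc)
    · simp only [sub_add_cancel] at this
      rw [dist_eq_norm] at hz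
      refine this.trans ?_
      rw [div_le_iff₀ (by linarith)]
      nlinarith
    · intro w hw
      have hw' : w + c ∈ Metric.ball c (3/2) := by simpa using hw
      have := (hf _ hw').comp_add_const w c
      exact this.differentiableAt.differentiableWithinAt
    · intro w hw
      exact hre _ (by simpa using hw)
    · rw [dist_eq_norm] at hz
      simp; linarith
  have hsB : s ∈ Metric.ball c (3/2) := by simp; linarith
  rw [← (hf s hsB).deriv]
  have := norm_deriv_le_of_forall_mem_sphere_norm_le (f := f) (c := s) (R := 1/8) (C := 22 * M) (by norm_num) ?_ ?_
  · linarith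
  · refine DifferentiableOn.diffContOnCl ?_
    intro z hz
    rw [closure_ball _ (by norm_num)] at hz
    have : dist z c ≤ dist z s + dist s c := dist_triangle _ _ _
    refine (hf z ?_).differentiableAt.differentiableWithinAt
    simp at hz ⊢; linarith
  · intro z hz
    have : dist z c ≤ dist z s + dist s c := dist_triangle _ _ _
    rw [Metric.mem_sphere] at hz
    exact hfb z (by linarith)

open scoped ArithmeticFunction.Moebius in
lemma L_lower : ∃ D : ℝ, 1 ≤ D ∧ ∀ (N : ℕ) [NeZero N] (χ : DirichletCharacter ℂ N) (s : ℂ),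
    s.re = 2 → 1 ≤ D * ‖DirichletCharacter.LFunction χ s‖ := by
  refine ⟨max 1 (∑' n, ‖LSeries.term (1 : ℕ → ℂ) 2 n‖), le_max_left _ _, ?_⟩
  intro N _ χ s hs
  have hs1 : 1 < s.re := by rw [hs]; norm_num
  have h := DirichletCharacter.LSeries.mul_mu_eq_one χ hs1
  rw [← DirichletCharacter.LFunction_eq_LSeries χ hs1] at h
  have h2 := congrArg norm h
  rw [norm_mul, norm_one, mul_comm] at h2
  rw [← h2]
  gcongr
  refine le_trans ?_ (le_max_right _ _)
  have hS1 : Summable (fun n => ‖LSeries.term (1 : ℕ → ℂ) 2 n‖) :=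
    (LSeriesSummable_one_iff.2 (by simp : 1 < (2:ℂ).re)).norm
  have hle : ∀ n, ‖LSeries.term ((fun n : ℕ => χ n) * (fun n : ℕ => ((μ n : ℤ) : ℂ))) s n‖ ≤ ‖LSeries.term (1 : ℕ → ℂ) 2 n‖ := by
    intro n
    rw [LSeries.norm_term_eq, LSeries.norm_term_eq, hs]
    split_ifs with hn
    · exact le_rfl
    · simp only [Pi.mul_apply, norm_mul, Pi.one_apply, norm_one, re_ofNat]
      gcongr
      refine mul_le_one₀ (χ.norm_le_one _) (norm_nonneg _) ?_
      rw [norm_intCast]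
      exact_mod_cast ArithmeticFunction.abs_moebius_le_one
  exact (norm_tsum_le_tsum_norm (hS1.of_nonneg_of_le (fun _ => norm_nonneg _) hle)).trans
    (Summable.tsum_le_tsum hle (hS1.of_nonneg_of_le (fun _ => norm_nonneg _) hle) hS1)



open scoped ArithmeticFunction.vonMangoldt in
lemma near_one : ∃ B : ℝ, 1 ≤ B ∧ ∀ (N : ℕ) [NeZero N] (χ : DirichletCharacter ℂ N) (s : ℂ),
    1 < s.re → s.re ≤ 2 →
    ‖deriv (DirichletCharacter.LFunction χ) s / DirichletCharacter.LFunction χ s‖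
      ≤ B / (s.re - 1) := by
  have hcont := DirichletCharacter.continuousOn_neg_logDeriv_LFunctionTrivChar₁ 1
  have hK : IsCompact ((fun x : ℝ => (x : ℂ)) '' Set.Icc 1 2) :=
    isCompact_Icc.image continuous_ofReal
  have hne : ∀ σ : ℝ, 1 < σ → DirichletCharacter.LFunctionTrivChar 1 σ ≠ 0 := by
    intro σ hσ
    exact DirichletCharacter.LFunction_ne_zero_of_one_le_re _ (Or.inr (by norm_cast; exact hσ.ne')) (by simpa using hσ.le)
  obtain ⟨K, hKb⟩ := hK.exists_bound_of_continuousOn (hcont.mono (by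
    rintro _ ⟨σ, hσ, rfl⟩
    rcases hσ.1.eq_or_lt with h | h
    · left; simp [← h]
    · right; exact hne σ h))
  have hlog : ∀ (N : ℕ) [NeZero N] (χ : DirichletCharacter ℂ N) (s : ℂ), 1 < s.re →
      LSeries ((fun n : ℕ => χ n) * (fun n : ℕ => ((Λ n : ℝ) : ℂ))) s =
        - (deriv (DirichletCharacter.LFunction χ) s / DirichletCharacter.LFunction χ s) := by
    intro N _ χ s hs
    rw [DirichletCharacter.LSeries_twist_vonMangoldt_eq χ hs,
      DirichletCharacter.LFunction_eq_LSeries χ hs, DirichletCharacter.deriv_LFunction_eq_deriv_LSeries χ hs, neg_div]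
  refine ⟨max 1 (1 + K), le_max_left _ _, ?_⟩
  intro N _ χ s hs1 hs2
  set σ := s.re with hσ
  have hσc : 1 < (σ : ℂ).re := by simpa
  have hz : ‖LSeries (fun n : ℕ => ((Λ n : ℝ) : ℂ)) σ‖ ≤ (1 + K) / (σ - 1) := by
    have h1 : LSeries (fun n : ℕ => ((Λ n : ℝ) : ℂ)) σ =
       - (deriv (DirichletCharacter.LFunctionTrivChar 1) σ / DirichletCharacter.LFunctionTrivChar 1 σ) := by
      rw [← hlog 1 1 σ hσc]
      congr 1
      ext n
      simp [MulChar.one_apply (isUnit_of_subsingleton (n : ZMod 1))]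
    have hs' : (σ : ℂ) ≠ 1 := by norm_cast; exact hs1.ne'
    have h2 := hKb σ ⟨σ, ⟨hs1.le, hs2⟩, rfl⟩
    rw [DirichletCharacter.deriv_LFunctionTrivChar₁_apply_of_ne_one 1 hs', DirichletCharacter.LFunctionTrivChar₁,
      Function.update_of_ne hs'] at h2
    have hL := hne σ hs1
    have hsub : (σ : ℂ) - 1 ≠ 0 := sub_ne_zero.2 hs'
    rw [h1]
    set a := deriv (DirichletCharacter.LFunctionTrivChar 1) σ
    set b := DirichletCharacter.LFunctionTrivChar 1 σ
    have h3 : -(a / b) = -(((σ:ℂ) - 1) * a + b) / ((σ - 1) * b) + 1 / (σ - 1) := by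
      field_simp; ring
    rw [h3]
    refine (norm_add_le _ _).trans ?_
    have h4 : ‖1 / ((σ:ℂ) - 1)‖ = 1 / (σ - 1) := by
      have : (σ : ℂ) - 1 = ((σ - 1 : ℝ) : ℂ) := by push_cast; rfl
      rw [this, norm_div, norm_real, norm_one, Real.norm_of_nonneg (by linarith)]
    rw [h4, add_div, add_comm]
    gcongr
    refine h2.trans ?_
    have hK0 : 0 ≤ K := (norm_nonneg _).trans h2
    rw [le_div_iff₀ (by linarith)]
    nlinarith
  have hpos : 0 < σ - 1 := by linarith
  have key : ‖LSeries ((fun n : ℕ => χ n) * (fun n : ℕ => ((Λ n : ℝ) : ℂ))) s‖ ≤ ‖LSeries (fun n : ℕ => ((Λ n : ℝ) : ℂ)) σ‖ := by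
    have hsum := (ArithmeticFunction.LSeriesSummable_vonMangoldt hσc).norm
    have hle : ∀ n, ‖LSeries.term ((fun n : ℕ => χ n) * (fun n : ℕ => ((Λ n : ℝ) : ℂ))) s n‖ ≤ ‖LSeries.term (fun n : ℕ => ((Λ n : ℝ) : ℂ)) σ n‖ := by
      intro n
      rw [LSeries.norm_term_eq, LSeries.norm_term_eq, ofReal_re]
      split_ifs with hn
      · exact le_rfl
      · simp only [Pi.mul_apply, norm_mul]
        gcongr
        exact mul_le_of_le_one_left (norm_nonneg _) (χ.norm_le_one _)
    have heq : LSeries (fun n : ℕ => ((Λ n : ℝ) : ℂ)) σ = ((∑' n, ‖LSeries.term (fun n : ℕ => ((Λ n : ℝ) : ℂ)) σ n‖ : ℝ) : ℂ) := by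
      rw [LSeries, ofReal_tsum]
      congr 1
      ext n
      rw [LSeries.norm_term_eq, LSeries.term_def]
      split_ifs with hn
      · simp
      · rw [norm_real, Real.norm_of_nonneg ArithmeticFunction.vonMangoldt_nonneg, ofReal_re, ofReal_div,
          ofReal_cpow (by positivity)]
        simp
    have hs2 := hsum.of_nonneg_of_le (fun _ => norm_nonneg _) hle
    rw [heq, norm_real, Real.norm_of_nonneg (tsum_nonneg (fun _ => norm_nonneg _))]
    exact (norm_tsum_le_tsum_norm hs2).trans (Summable.tsum_le_tsum hle hs2 hsum)
  rw [hlog N χ s hs1, norm_neg] at key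
  refine key.trans (hz.trans ?_)
  gcongr
  exact le_max_right _ _


lemma L_ne_zero {N : ℕ} [NeZero N] (χ : DirichletCharacter ℂ N) (hχ : χ ≠ 1) (hG : GRHFor χ)
    (s : ℂ) (hs : 1/2 < s.re) : DirichletCharacter.LFunction χ s ≠ 0 := by
  intro h
  by_cases h1 : s.re < 1
  · have := hG s (by linarith) h1 h
    linarith
  · exact DirichletCharacter.LFunction_ne_zero_of_one_le_re χ (Or.inl hχ) (by linarith) h

lemma strip_bound : ∃ K : ℝ, 1 ≤ K ∧ ∀ (N : ℕ) [NeZero N], 3 ≤ N → ∀ χ : DirichletCharacter ℂ N,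
    χ ≠ 1 → GRHFor χ → ∀ s : ℂ, 3/4 ≤ s.re → s.re ≤ 2 →
    ‖deriv (DirichletCharacter.LFunction χ) s / DirichletCharacter.LFunction χ s‖
      ≤ K * Real.log N * (1 + |s.im|) := by
  obtain ⟨D, hD1, hD⟩ := L_lower
  have hlD : 0 ≤ Real.log (16 * D) := Real.log_nonneg (by linarith)
  refine ⟨176 * (1 + Real.log (16 * D)), by linarith, ?_⟩
  intro N _ hN χ hχ hG s hs1 hs2
  have hN3 : (3:ℝ) ≤ N := by exact_mod_cast hN
  have hlN : 1 ≤ Real.log N := by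
    rw [Real.le_log_iff_exp_le (by linarith)]
    linarith [Real.exp_one_lt_d9]
  set t := s.im with ht
  set c : ℂ := ⟨2, t⟩ with hc
  have hpos : 0 < 16 * D * N * (1 + |t|) := by positivity
  set M := Real.log (16 * D * N * (1 + |t|)) with hM
  have ht1 : Real.log (1 + |t|) ≤ |t| := by
    have := Real.log_le_sub_one_of_pos (show 0 < 1 + |t| by positivity)
    linarith
  have hMe : M = Real.log (16 * D) + Real.log N + Real.log (1 + |t|) := by
    rw [hM, Real.log_mul (by positivity) (by positivity), Real.log_mul (by positivity) (by positivity)]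
  have ht0 : 0 ≤ Real.log (1 + |t|) := Real.log_nonneg (by linarith [abs_nonneg t])
  have hmain := logderiv_bound (DirichletCharacter.LFunction χ) c
    (DirichletCharacter.differentiable_LFunction hχ) ?_ M (by linarith) ?_ s ?_
  · refine hmain.trans ?_
    have : M ≤ (1 + Real.log (16 * D)) * Real.log N * (1 + |t|) := by
      rw [hMe]
      have h1 : Real.log (16*D) ≤ Real.log (16*D) * Real.log N := by nlinarith
      have h2 := mul_nonneg hlD (abs_nonneg t)
      have h3 : |t| ≤ |t| * Real.log N := by nlinarith [abs_nonneg t]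
      have h4 := mul_nonneg (mul_nonneg hlD (by linarith : 0 ≤ Real.log N)) (abs_nonneg t)
      nlinarith
    nlinarith
  · intro z hz
    have h := abs_re_le_norm (z - c)
    rw [Metric.mem_ball, dist_eq_norm] at hz
    have h2 := (abs_le.1 h).1
    simp [hc] at h2
    exact L_ne_zero χ hχ hG z (by rw [← hc] at h2; linarith)
  · intro z hz
    have h := abs_re_le_norm (z - c)
    rw [Metric.mem_ball, dist_eq_norm] at hz
    have h2 := (abs_le.1 h).1
    have hre : (z - c).re = z.re - 2 := by simp [hc]
    rw [hre] at h2
    have hz1 : 1/2 < z.re := by linarith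
    have h3 := L_bound χ hχ z (by linarith)
    have hcn : ‖c‖ ≤ 2 + |t| := by
      refine (norm_le_abs_re_add_abs_im c).trans ?_
      simp [hc]
    have hzn : ‖z‖ ≤ 4 * (1 + |t|) := by
      have : ‖z‖ ≤ ‖z - c‖ + ‖c‖ := by simpa using norm_add_le (z - c) c
      linarith [abs_nonneg t]
    have h4 := hD N χ c (by simp [hc])
    rw [hM, Real.exp_log hpos]
    calc _ ≤ ‖z‖ * (2 * N / z.re) := h3
      _ ≤ (4 * (1 + |t|)) * (2 * N / (1/2)) := by gcongr
      _ = 16 * N * (1 + |t|) * 1 := by ring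
      _ ≤ 16 * N * (1 + |t|) * (D * ‖DirichletCharacter.LFunction χ c‖) := by gcongr
      _ = _ := by ring
  · rw [dist_eq_norm]
    refine (norm_le_abs_re_add_abs_im _).trans ?_
    have h1 : (s - c).re = s.re - 2 := by simp [hc]
    have h2 : (s - c).im = 0 := by simp [hc, ht]
    rw [h1, h2, abs_of_nonpos (by linarith)]
    simp; linarith

/-- Under GRH, for primitive `χ` mod `N`, the logarithmic derivative of `L(s,χ)` at
`s = 1 + 2iT` is `O_T(log log N)`. -/
theorem log_deriv_L_bound_on_GRH (T : ℝ) :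
    ∃ C : ℝ, 0 < C ∧ ∀ (N : ℕ) [NeZero N], 3 ≤ N →
      ∀ χ : DirichletCharacter ℂ N, χ.IsPrimitive → GRHFor χ →
        DirichletCharacter.LFunction χ (1 + 2 * Complex.I * (T : ℂ)) ≠ 0 ∧
        ‖deriv (DirichletCharacter.LFunction χ) (1 + 2 * Complex.I * (T : ℂ)) /
            DirichletCharacter.LFunction χ (1 + 2 * Complex.I * (T : ℂ))‖
          ≤ C * Real.log (Real.log N) := by
  obtain ⟨K, hK1, hK⟩ := strip_bound
  obtain ⟨B, hB1, hB⟩ := near_one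
  have hl3 : 1 < Real.log 3 := by
    rw [Real.lt_log_iff_exp_lt (by norm_num)]
    linarith [Real.exp_one_lt_d9]
  set x0 := Real.log (Real.log 3) with hx0
  have hx0p : 0 < x0 := Real.log_pos hl3
  -- constants
  set E : ℝ := 4 + 4 * |T| with hE
  have hE1 : 1 ≤ E := by linarith [abs_nonneg T]
  set A : ℝ := K * E with hA
  have hA1 : 1 ≤ A := one_le_mul_of_one_le_of_one_le hK1 hE1
  refine ⟨Real.exp (4 * (Real.log A + 1)) * (4/3 * B) * (1 + 1 / x0), by positivity, ?_⟩
  intro N _ hN χ hprim hG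
  have hN3 : (3:ℝ) ≤ N := by exact_mod_cast hN
  have hχ : χ ≠ 1 := by
    rintro rfl
    have : (1 : DirichletCharacter ℂ N).conductor = N := hprim
    rw [DirichletCharacter.conductor_one] at this
    omega
  set s1 : ℂ := 1 + 2 * Complex.I * (T : ℂ) with hs1
  have hs1re : s1.re = 1 := by simp [hs1]
  have hs1im : s1.im = 2 * T := by simp [hs1]
  refine ⟨L_ne_zero χ hχ hG s1 (by rw [hs1re]; norm_num), ?_⟩
  have hlN : 1 < Real.log N := hl3.trans_le (Real.log_le_log (by norm_num) hN3)
  set x := Real.log (Real.log N) with hx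
  have hxx : x0 ≤ x := Real.log_le_log (by linarith) (Real.log_le_log (by norm_num) hN3)
  have hxp : 0 < x := by linarith
  set η : ℝ := 1 / (x + 1) with hη
  have hηp : 0 < η := by positivity
  have hη1 : η ≤ 1 := by
    rw [hη, div_le_one (by linarith)]; linarith
  set g : ℂ → ℂ := fun s => deriv (DirichletCharacter.LFunction χ) s / DirichletCharacter.LFunction χ s with hg
  set w : ℂ := 2 * Complex.I * (T : ℂ) with hw
  have hwre : w.re = 0 := by simp [hw]
  have hwim : w.im = 2 * T := by simp [hw]
  set F : ℂ → ℂ := fun s => g s / (s - w) with hF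
  have hFs1 : F s1 = g s1 := by
    have : s1 - w = 1 := by simp [hs1]
    simp [hF, this]
  have hnorm : ∀ s : ℂ, 3/4 ≤ s.re → 3/4 ≤ ‖s - w‖ := by
    intro s hs
    have := (le_abs_self _).trans (abs_re_le_norm (s - w))
    rw [sub_re, hwre] at this
    linarith
  have hstrip : ∀ s : ℂ, 3/4 ≤ s.re → s.re ≤ 2 → ‖F s‖ ≤ A * Real.log N := by
    intro s h1 h2
    have h3 := hK N hN χ hχ hG s h1 h2
    have h4 := hnorm s h1
    have h5 := abs_im_le_norm (s - w)
    rw [sub_im, hwim] at h5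
    have h6 : |s.im| ≤ |s.im - 2 * T| + 2 * |T| := by
      have := abs_add_le (s.im - 2 * T) (2 * T)
      rw [abs_mul 2 T, abs_two] at this
      simpa using this
    simp only [hF, norm_div]
    rw [div_le_iff₀ (by linarith)]
    refine h3.trans ?_
    have h7 : 1 + |s.im| ≤ E * ‖s - w‖ := by
      rw [hE]
      nlinarith [abs_nonneg T]
    calc _ ≤ K * Real.log N * (E * ‖s - w‖) := by gcongr
      _ = _ := by rw [hA]; ring
  have hright : ∀ s : ℂ, s.re = 1 + η → ‖F s‖ ≤ 4/3 * B * (x + 1) := by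
    intro s hs
    have h3 := hB N χ s (by linarith) (by linarith)
    have h4 := hnorm s (by linarith)
    have h5 : B / (s.re - 1) = B * (x + 1) := by
      rw [hs, hη]; field_simp; ring
    rw [h5] at h3
    simp only [hF, norm_div]
    rw [div_le_iff₀ (by linarith)]
    refine h3.trans ?_
    have : 0 ≤ B * (x+1) := by positivity
    nlinarith
  have hgd : ∀ s : ℂ, 3/4 ≤ s.re → DifferentiableAt ℂ F s := by
    intro s hs
    have hL := DirichletCharacter.differentiable_LFunction hχ
    have hd : Differentiable ℂ (deriv (DirichletCharacter.LFunction χ)) :=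
      (hL.contDiff (n := 2)).differentiable_deriv_two
    refine DifferentiableAt.div (DifferentiableAt.div (hd s) (hL s) (L_ne_zero χ hχ hG s (by linarith)))
      (by fun_prop) ?_
    have := hnorm s hs
    exact norm_pos_iff.1 (by linarith)
  have h3l := Complex.HadamardThreeLines.norm_le_interp_of_mem_verticalClosedStrip'
    (f := F) (z := s1) (l := 3/4) (u := 1 + η) (a := A * Real.log N) (b := 4/3 * B * (x+1))
    (by linarith) ?_ ?_ ?_ ?_ ?_
  · rw [hFs1, hs1re] at h3l
    refine h3l.trans ?_
    have hθ1 : (1 - 3/4 : ℝ) / (1 + η - 3/4) ≤ 1 := by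
      rw [div_le_one (by linarith)]; linarith
    have hθ2 : 1 - (1 - 3/4 : ℝ) / (1 + η - 3/4) ≤ 4 * η := by
      rw [sub_le_comm, le_div_iff₀ (by linarith)]
      nlinarith
    have hb1 : 1 ≤ 4/3 * B * (x+1) := by nlinarith
    have ha1 : 1 ≤ A * Real.log N := one_le_mul_of_one_le_of_one_le hA1 hlN.le
    have e1 : (4/3 * B * (x+1)) ^ ((1 - 3/4 : ℝ) / (1 + η - 3/4)) ≤ 4/3 * B * (x+1) := by
      calc _ ≤ (4/3 * B * (x+1)) ^ (1:ℝ) := Real.rpow_le_rpow_of_exponent_le hb1 hθ1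
        _ = _ := Real.rpow_one _
    have e2 : (A * Real.log N) ^ (1 - (1 - 3/4 : ℝ) / (1 + η - 3/4)) ≤ Real.exp (4 * (Real.log A + 1)) := by
      calc _ ≤ (A * Real.log N) ^ (4 * η) := Real.rpow_le_rpow_of_exponent_le ha1 hθ2
        _ = Real.exp ((Real.log A + x) * (4 * η)) := by
          rw [Real.rpow_def_of_pos (by linarith), Real.log_mul (by linarith) (by linarith)]
        _ ≤ _ := by
          apply Real.exp_le_exp.2
          have hlA : 0 ≤ Real.log A := Real.log_nonneg hA1
          have hxη : x * η ≤ 1 := by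
            rw [hη, mul_one_div, div_le_one (by linarith)]; linarith
          nlinarith
    have e3 : x + 1 ≤ (1 + 1 / x0) * x := by
      have : 1 ≤ 1 / x0 * x := by
        rw [one_div, inv_mul_eq_div, le_div_iff₀ hx0p]; linarith
      linarith
    calc _ ≤ Real.exp (4 * (Real.log A + 1)) * (4/3 * B * (x+1)) := by gcongr
      _ ≤ Real.exp (4 * (Real.log A + 1)) * (4/3 * B * ((1 + 1 / x0) * x)) := by gcongr
      _ = _ := by ring
  · simp only [HadamardThreeLines.verticalClosedStrip, Set.mem_preimage, hs1re, Set.mem_Icc]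
    constructor <;> linarith
  · refine DifferentiableOn.diffContOnCl ?_
    intro z hz
    rw [HadamardThreeLines.verticalStrip, closure_preimage_re, closure_Ioo (by linarith)] at hz
    exact (hgd z hz.1).differentiableWithinAt
  · refine ⟨A * Real.log N, ?_⟩
    rintro _ ⟨z, hz, rfl⟩
    exact hstrip z hz.1 (by linarith [hz.2])
  · intro z hz
    have : z.re = 3/4 := hz
    exact hstrip z (by linarith) (by linarith)
  · intro z hz
    exact hright z hz
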